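/- Nilpotency from small S-arithmetic Mahler measure (Lemma in §6.5): There exists a constant β with 0 < β < 1 depending only on d such that the following holds. Let S be any finite set of places of ℚ containing the archimedean place, let ℤ_S = {r ∈ ℚ : |r|_q ≤ 1 for every prime q ∉ S} be the ring of S-integers, and let w be a d × d matrix with entries in ℤ_S. If there exist elements g_v ∈ SL_d(ℚ_v) for each v ∈ S such that ∏_{v ∈ S} ‖g_v w g_v^{-1}‖_v ≤ β, then w is nilpotent. -/

import Mathlib

theorem aux_trace_nilp {d : ℕ} (w : Matrix (Fin d) (Fin d) ℚ)
    (h : ∀ k : ℕ, (w ^ (k + 1)).trace = 0) : IsNilpotent w := by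
  classical
  have hp : ∀ p : Polynomial ℚ, (Polynomial.aeval w (p * Polynomial.X)).trace = 0 := by
    intro p
    induction p using Polynomial.induction_on' with
    | add p q hp hq => rw [add_mul, map_add, Matrix.trace_add, hp, hq, add_zero]
    | monomial n a =>
      rw [Polynomial.monomial_mul_X, Polynomial.aeval_monomial, ← Algebra.smul_def,
        Matrix.trace_smul, h, smul_zero]
  have hf0 : Polynomial.X * w.charpoly ≠ 0 :=
    mul_ne_zero Polynomial.X_ne_zero w.charpoly_monic.ne_zero
  obtain ⟨q, hq, hnd⟩ :=
    Polynomial.exists_eq_pow_rootMultiplicity_mul_and_not_dvd (Polynomial.X * w.charpoly) hf0 0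
  have hm : 0 < (Polynomial.X * w.charpoly).rootMultiplicity 0 := by
    rw [Polynomial.rootMultiplicity_pos hf0]
    simp [Polynomial.IsRoot]
  revert hq hm
  generalize (Polynomial.X * w.charpoly).rootMultiplicity 0 = m
  intro hq hm
  rw [Polynomial.C_0, sub_zero] at hq hnd
  obtain ⟨m, rfl⟩ : ∃ n, m = n + 1 := ⟨m - 1, by omega⟩
  have hco : IsCoprime (Polynomial.X ^ (m + 1)) q :=
    ((Polynomial.irreducible_X.coprime_iff_not_dvd).2 hnd).pow_left
  obtain ⟨a, b, hab⟩ := hco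
  have hz : Polynomial.aeval w (Polynomial.X ^ (m + 1) * q) = 0 := by
    rw [← hq, map_mul, Matrix.aeval_self_charpoly, mul_zero]
  set e := Polynomial.aeval w (a * Polynomial.X ^ (m + 1)) with he
  have hidem : IsIdempotentElem e := by
    have h1 : (a * Polynomial.X ^ (m + 1)) * (a * Polynomial.X ^ (m + 1)) =
        a * Polynomial.X ^ (m + 1) - a * b * (Polynomial.X ^ (m + 1) * q) := by
      linear_combination (a * Polynomial.X ^ (m + 1)) * hab
    rw [IsIdempotentElem, he, ← map_mul, h1, map_sub, map_mul _ (a * b), hz, mul_zero, sub_zero]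
  have htr : e.trace = 0 := by
    rw [he, pow_succ, ← mul_assoc]; exact hp _
  have he0 : e = 0 := by
    have h2 : IsIdempotentElem (Matrix.toLin' e) := by
      rw [IsIdempotentElem, Module.End.mul_eq_comp, ← Matrix.toLin'_mul, hidem.eq]
    have h3 := (LinearMap.IsIdempotentElem.trace_eq_zero_iff h2).1
      (by rw [Matrix.trace_toLin'_eq, htr])
    simpa using h3
  refine ⟨m + 1, ?_⟩
  have h4 : (Polynomial.X : Polynomial ℚ) ^ (m + 1) = Polynomial.X ^ (m + 1) *
      (a * Polynomial.X ^ (m + 1)) + b * (Polynomial.X ^ (m + 1) * q) := by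
    linear_combination -(Polynomial.X ^ (m + 1)) * hab
  have h5 := congrArg (Polynomial.aeval w) h4
  rw [map_add, map_mul, map_mul _ b, hz, ← he, he0] at h5
  simpa using h5

theorem aux_real {d : ℕ} (M : Matrix (Fin d) (Fin d) ℝ) (N : ℝ)
    (hM : ∀ i j, |M i j| ≤ N) (k : ℕ) : |(M ^ (k + 1)).trace| ≤ (d * N) ^ (k + 1) := by
  have h : ∀ k : ℕ, ∀ i j, |(M ^ (k + 1)) i j| ≤ d ^ k * N ^ (k + 1) := by
    intro k
    induction k with
    | zero => simpa using hM
    | succ k ih =>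
      intro i j
      rw [pow_succ, Matrix.mul_apply]
      refine (Finset.abs_sum_le_sum_abs _ _).trans ?_
      refine (Finset.sum_le_card_nsmul _ _ (d ^ k * N ^ (k + 1) * N) ?_).trans ?_
      · intro l _
        rw [abs_mul]
        exact mul_le_mul (ih i l) (hM l j) (abs_nonneg _) ((abs_nonneg _).trans (ih i l))
      · simp only [Finset.card_univ, Fintype.card_fin, nsmul_eq_mul]
        apply le_of_eq; ring
  rw [Matrix.trace]
  refine (Finset.abs_sum_le_sum_abs _ _).trans ?_
  refine (Finset.sum_le_card_nsmul _ _ (d ^ k * N ^ (k + 1)) fun l _ => h k l l).trans ?_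
  simp only [Finset.card_univ, Fintype.card_fin, nsmul_eq_mul]
  apply le_of_eq; ring

theorem aux_padic {d p : ℕ} [Fact p.Prime] (M : Matrix (Fin d) (Fin d) ℚ_[p]) (N : ℝ)
    (hN : 0 ≤ N) (hM : ∀ i j, ‖M i j‖ ≤ N) (k : ℕ) : ‖(M ^ (k + 1)).trace‖ ≤ N ^ (k + 1) := by
  have h : ∀ k : ℕ, ∀ i j, ‖(M ^ (k + 1)) i j‖ ≤ N ^ (k + 1) := by
    intro k
    induction k with
    | zero => simpa using hM
    | succ k ih =>
      intro i j
      rw [pow_succ, Matrix.mul_apply]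
      refine IsUltrametricDist.norm_sum_le_of_forall_le_of_nonneg (by positivity) ?_
      intro l _
      rw [norm_mul, pow_succ N]
      exact mul_le_mul (ih i l) (hM l j) (norm_nonneg _) (by positivity)
  exact IsUltrametricDist.norm_sum_le_of_forall_le_of_nonneg (by positivity) fun l _ => h k l l

theorem aux_conj {d : ℕ} {K : Type*} [Field K] [CharZero K] (w : Matrix (Fin d) (Fin d) ℚ)
    (g : Matrix (Fin d) (Fin d) K) (hg : g.det = 1) (k : ℕ) :
    ((g * w.map (Rat.cast : ℚ → K) * g⁻¹) ^ k).trace = (((w ^ k).trace : ℚ) : K) := by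
  have hu : IsUnit g.det := by rw [hg]; exact isUnit_one
  have h1 : (g * w.map (Rat.cast : ℚ → K) * g⁻¹) ^ k =
      g * (w.map (Rat.cast : ℚ → K)) ^ k * g⁻¹ := by
    induction k with
    | zero => simp [Matrix.mul_nonsing_inv g hu]
    | succ k ih =>
      rw [pow_succ, ih, pow_succ]
      simp only [Matrix.mul_assoc]
      rw [← Matrix.mul_assoc g⁻¹ g, Matrix.nonsing_inv_mul g hu, Matrix.one_mul]
  rw [h1, Matrix.trace_mul_comm, ← Matrix.mul_assoc, Matrix.nonsing_inv_mul g hu, Matrix.one_mul]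
  have h2 : w.map (Rat.cast : ℚ → K) = (Rat.castHom K).mapMatrix w := rfl
  rw [h2, ← map_pow]
  exact (AddMonoidHom.map_trace (Rat.castHom K) (w ^ k)).symm

theorem aux_integer (r : ℚ) (h : ∀ q : ℕ, q.Prime → padicNorm q r ≤ 1) (hr : r ≠ 0) :
    1 ≤ |r| := by
  have hden : r.den = 1 := by
    by_contra hne
    obtain ⟨p, hp, hpd⟩ := Nat.exists_prime_and_dvd hne
    haveI : Fact p.Prime := ⟨hp⟩
    have h1 : padicNorm p (r.den : ℚ) < 1 := (padicNorm.nat_lt_one_iff _).2 hpd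
    have h2 : padicNorm p (r.num : ℚ) = 1 := by
      rw [padicNorm.int_eq_one_iff]
      intro hdv
      have := Nat.dvd_gcd (Int.natCast_dvd.1 hdv) hpd
      rw [r.reduced.gcd_eq_one] at this
      exact hp.one_lt.ne' (Nat.dvd_one.1 this)
    have h3 : padicNorm p r * padicNorm p (r.den : ℚ) = 1 := by
      rw [← padicNorm.mul, Rat.mul_den_eq_num, h2]
    have := h p hp
    have h0 := padicNorm.nonneg (p := p) (r.den : ℚ)
    nlinarith
  have h4 : (r.num : ℚ) = r := Rat.coe_int_num_of_den_eq_one hden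
  rw [← h4]
  have : (1 : ℤ) ≤ |r.num| := Int.one_le_abs (by simpa using hr)
  exact_mod_cast this

theorem aux_norm_norm (q p : ℕ) (hq : q.Prime) (hp : p.Prime) (r : ℚ) (hr : r ≠ 0) :
    padicNorm q (padicNorm p r) = if p = q then (padicNorm p r)⁻¹ else 1 := by
  haveI : Fact q.Prime := ⟨hq⟩
  haveI : Fact p.Prime := ⟨hp⟩
  have hz : ∀ (x : ℚ) (n : ℤ), padicNorm q (x ^ n) = padicNorm q x ^ n := by
    intro x n
    have := map_zpow₀ (IsAbsoluteValue.abvHom (padicNorm q)) x n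
    exact this
  rw [padicNorm.eq_zpow_of_nonzero hr, hz]
  split_ifs with hpq
  · subst hpq
    rw [padicNorm.padicNorm_p_of_prime, inv_zpow]
  · rw [padicNorm.padicNorm_of_prime_of_ne (fun h => hpq h.symm), one_zpow]

theorem aux_product (Sf : Finset ℕ) (hSf : ∀ p ∈ Sf, Nat.Prime p) (r : ℚ) (hr : r ≠ 0)
    (h : ∀ q : ℕ, q.Prime → q ∉ Sf → padicNorm q r ≤ 1) :
    1 ≤ |r| * ∏ p ∈ Sf, padicNorm p r := by
  have hpos : ∀ p ∈ Sf, 0 < padicNorm p r := fun p hp => by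
    haveI : Fact p.Prime := ⟨hSf p hp⟩
    exact lt_of_le_of_ne (padicNorm.nonneg _) (padicNorm.nonzero hr).symm
  have hP : 0 < ∏ p ∈ Sf, padicNorm p r := Finset.prod_pos hpos
  have := aux_integer (r * ∏ p ∈ Sf, padicNorm p r) ?_ (mul_ne_zero hr hP.ne')
  · rwa [abs_mul, abs_of_pos hP] at this
  intro q hq
  haveI : Fact q.Prime := ⟨hq⟩
  have hprod : padicNorm q (∏ p ∈ Sf, padicNorm p r) = ∏ p ∈ Sf, padicNorm q (padicNorm p r) :=
    map_prod (IsAbsoluteValue.abvHom (padicNorm q)) _ _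
  rw [padicNorm.mul, hprod,
    Finset.prod_congr rfl fun p hp => aux_norm_norm q p hq (hSf p hp) r hr, Finset.prod_ite_eq']
  split_ifs with hqS
  · exact (mul_inv_cancel₀ (hpos q hqS).ne').le
  · simpa using h q hq hqS

/-- The max norm `‖M‖_p` (maximum of the `p`-adic norms of the entries) of a matrix over
`ℚ_[p]`. -/
noncomputable def padicMatSup {d p : ℕ} [Fact p.Prime]
    (M : Matrix (Fin d) (Fin d) ℚ_[p]) : ℝ :=
  ⨆ ij : Fin d × Fin d, ‖M ij.1 ij.2‖

/-- The quantity `‖g w g⁻¹‖_p` for a rational matrix `w` and `g ∈ GL_d(ℚ_[p])`. -/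
noncomputable def padicConjNorm {d p : ℕ} [Fact p.Prime]
    (w : Matrix (Fin d) (Fin d) ℚ) (g : Matrix (Fin d) (Fin d) ℚ_[p]) : ℝ :=
  padicMatSup (g * w.map (Rat.cast : ℚ → ℚ_[p]) * g⁻¹)

/-- `g ∈ SL_d(ℚ_[p])`: the matrix `g` over `ℚ_[p]` has determinant `1`. -/
def padicDetOne {d p : ℕ} [Fact p.Prime] (g : Matrix (Fin d) (Fin d) ℚ_[p]) : Prop :=
  g.det = 1

/-- The quantity `‖g w g⁻¹‖_∞` for a rational matrix `w` and `g ∈ GL_d(ℝ)`. -/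
noncomputable def realConjNorm {d : ℕ} (w : Matrix (Fin d) (Fin d) ℚ)
    (g : Matrix (Fin d) (Fin d) ℝ) : ℝ :=
  ⨆ ij : Fin d × Fin d, |(g * w.map (Rat.cast : ℚ → ℝ) * g⁻¹) ij.1 ij.2|

/-- **Nilpotency from small S-arithmetic Mahler measure (Lemma in §6.5).**  There is a
constant `0 < β < 1` depending only on `d` such that: for every finite set
`S = {∞} ∪ Sf` of places of ℚ (with `Sf` a finite set of primes) and every `d × d` matrix
`w` with entries in the ring `ℤ_S` of `S`-integers, if there are `g_∞ ∈ SL_d(ℝ)` and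
`g_p ∈ SL_d(ℚ_p)` for `p ∈ Sf` with `∏_{v ∈ S} ‖g_v w g_v⁻¹‖_v ≤ β`, then `w` is
nilpotent. -/
theorem nilpotent_of_small_mahler (d : ℕ) (hd : 1 ≤ d) :
    ∃ β : ℝ, 0 < β ∧ β < 1 ∧
      ∀ (Sf : Finset ℕ) (hSf : ∀ p ∈ Sf, Nat.Prime p)
        (w : Matrix (Fin d) (Fin d) ℚ),
        (∀ (i j : Fin d) (q : ℕ), Nat.Prime q → q ∉ Sf → padicNorm q (w i j) ≤ 1) →
        ∀ (g_inf : Matrix (Fin d) (Fin d) ℝ)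
          (g : (p : ℕ) → (hp : p ∈ Sf) →
            Matrix (Fin d) (Fin d) (@Padic p ⟨hSf p hp⟩)),
          g_inf.det = 1 →
          (∀ (p : ℕ) (hp : p ∈ Sf), @padicDetOne d p ⟨hSf p hp⟩ (g p hp)) →
          realConjNorm w g_inf *
              ∏ p ∈ Sf.attach, @padicConjNorm d p.1 ⟨hSf p.1 p.2⟩ w (g p.1 p.2) ≤ β →
          IsNilpotent w := by
  have hd0 : (0 : ℝ) < d := by exact_mod_cast hd
  have hd1 : (1 : ℝ) ≤ d := by exact_mod_cast hd
  refine ⟨1 / (2 * d), by positivity, ?_, ?_⟩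
  · rw [div_lt_one (by positivity)]; linarith
  intro Sf hSf w hw g_inf g hdet hgdet hle
  apply aux_trace_nilp
  intro k
  by_contra hne
  set r : ℚ := (w ^ (k + 1)).trace with hr
  -- the trace is an `S`-integer
  have hint : ∀ q : ℕ, q.Prime → q ∉ Sf → padicNorm q r ≤ 1 := by
    intro q hq hqS
    haveI : Fact q.Prime := ⟨hq⟩
    have h1 := aux_padic (p := q) (1 * w.map (Rat.cast : ℚ → ℚ_[q]) * 1⁻¹) 1 zero_le_one
      (by
        intro i j
        rw [inv_one, one_mul, mul_one, Matrix.map_apply, Padic.eq_padicNorm]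
        exact_mod_cast hw i j q hq hqS) k
    rw [aux_conj w 1 Matrix.det_one, Padic.eq_padicNorm, one_pow] at h1
    exact_mod_cast h1
  have hprod := aux_product Sf hSf r hne hint
  -- the real estimate
  have hreal : |(r : ℝ)| ≤ (d * realConjNorm w g_inf) ^ (k + 1) := by
    rw [hr, ← aux_conj w g_inf hdet]
    refine aux_real _ _ ?_ k
    intro i j
    exact le_ciSup (f := fun ij : Fin d × Fin d =>
      |(g_inf * w.map (Rat.cast : ℚ → ℝ) * g_inf⁻¹) ij.1 ij.2|)
      (Set.finite_range _).bddAbove (i, j)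
  have hreal0 : 0 ≤ realConjNorm w g_inf := Real.iSup_nonneg fun _ => abs_nonneg _
  -- the `p`-adic estimates
  have hpad0 : ∀ p : Sf, 0 ≤ @padicConjNorm d p.1 ⟨hSf p.1 p.2⟩ w (g p.1 p.2) := by
    intro p
    haveI : Fact p.1.Prime := ⟨hSf p.1 p.2⟩
    exact Real.iSup_nonneg fun _ => norm_nonneg _
  have hpad : ∀ p : Sf, ((padicNorm p.1 r : ℚ) : ℝ) ≤
      (@padicConjNorm d p.1 ⟨hSf p.1 p.2⟩ w (g p.1 p.2)) ^ (k + 1) := by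
    intro p
    haveI : Fact p.1.Prime := ⟨hSf p.1 p.2⟩
    rw [← Padic.eq_padicNorm, hr, ← aux_conj w (g p.1 p.2) (hgdet p.1 p.2)]
    refine aux_padic _ _ (hpad0 p) ?_ k
    intro i j
    exact le_ciSup (f := fun ij : Fin d × Fin d =>
      ‖(g p.1 p.2 * w.map (Rat.cast : ℚ → ℚ_[p.1]) * (g p.1 p.2)⁻¹) ij.1 ij.2‖)
      (Set.finite_range _).bddAbove (i, j)
  have hprod' : (1 : ℝ) ≤ |(r : ℝ)| * ∏ p ∈ Sf.attach, ((padicNorm p.1 r : ℚ) : ℝ) := by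
    rw [Finset.prod_attach Sf fun p => ((padicNorm p r : ℚ) : ℝ)]
    exact_mod_cast hprod
  have hpp : ∏ p ∈ Sf.attach, ((padicNorm p.1 r : ℚ) : ℝ) ≤
      (∏ p ∈ Sf.attach, @padicConjNorm d p.1 ⟨hSf p.1 p.2⟩ w (g p.1 p.2)) ^ (k + 1) := by
    rw [← Finset.prod_pow]
    refine Finset.prod_le_prod (fun p _ => ?_) fun p _ => hpad p
    haveI : Fact p.1.Prime := ⟨hSf p.1 p.2⟩
    exact_mod_cast padicNorm.nonneg (p := p.1) r
  have hpp0 : 0 ≤ ∏ p ∈ Sf.attach, ((padicNorm p.1 r : ℚ) : ℝ) := by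
    refine Finset.prod_nonneg fun p _ => ?_
    haveI : Fact p.1.Prime := ⟨hSf p.1 p.2⟩
    exact_mod_cast padicNorm.nonneg (p := p.1) r
  have hA := mul_le_mul hreal hpp hpp0 (by positivity)
  have hPn := Finset.prod_nonneg fun (p : Sf) (_ : p ∈ Sf.attach) => hpad0 p
  have hB : (d * realConjNorm w g_inf) * (∏ p ∈ Sf.attach,
      @padicConjNorm d p.1 ⟨hSf p.1 p.2⟩ w (g p.1 p.2)) ≤ 1 / 2 := by
    rw [mul_assoc]
    refine (mul_le_mul_of_nonneg_left hle hd0.le).trans (le_of_eq ?_)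
    field_simp
  rw [← mul_pow] at hA
  have hC := pow_lt_one₀ (mul_nonneg (mul_nonneg hd0.le hreal0) hPn)
    (hB.trans_lt (by norm_num)) (Nat.succ_ne_zero k)
  exact absurd (hprod'.trans hA) (not_le.2 hC)
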